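/- Let r ≥ 2. There exists N_r ∈ ℕ such that for all k ∈ ℕ^r not of the form (m,1,...,1), (1,...,1,m), (m,1,...,1,2,1,...,1) with m ≥ 2, or the reverses of these, and with L(k−𝟙) > N_r, one has a_r(k) ≥ (3/2)·(1/(r−1)!)·((2/r)·L(k−𝟙))^r. -/

import Mathlib

open Finset

/-- `h_r(y) = ∏_{1 ≤ ℓ ≤ j ≤ r} (y_ℓ + ⋯ + y_j)`. -/
noncomputable def hpoly (r : ℕ) (y : Fin r → ℝ) : ℝ :=
  ∏ p ∈ Finset.univ.filter (fun p : Fin r × Fin r => p.1 ≤ p.2),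
    ∑ i ∈ Finset.Icc p.1 p.2, y i

/-- `c_r = r!(r-1)!⋯1!`. -/
def crconst (r : ℕ) : ℕ := ∏ i ∈ Finset.range r, Nat.factorial (i + 1)

/-- The Weyl dimension polynomial `a_r(k) = h_r(k)/c_r`. -/
noncomputable def apoly (r : ℕ) (y : Fin r → ℝ) : ℝ := hpoly r y / crconst r

/-- The height function `L(k) = (1/2) ∑_{j=1}^r j(r+1-j) k_j` (here `j` is 1-indexed). -/
noncomputable def Lfun (r : ℕ) (k : Fin r → ℝ) : ℝ :=
  (1 / 2) * ∑ j : Fin r, ((j : ℕ) + 1 : ℝ) * ((r : ℝ) - (j : ℕ)) * k j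

/-!
The intervals of `{0, …, r-1}` avoiding the first index are the intervals of the tail, and the mean
of `x` over any interval contributes one factor to `a_r(x)`; so `a_r(x)` is the product of the means
over the initial intervals and of `a_{r-1}` of the tail, and all these factors are at least `1`.

Let `x i` be the largest entry. If `i` is interior, it lies in more than `r` intervals, so `a_r(x)`
grows like `(x i) ^ (r + 1)`, which beats the `r`th power of the height. If `i` is the first index
(the last one is symmetric), the initial intervals contribute at least `(x 0) ^ r / r!`, and the
estimate needs slightly more than a factor `3r / 2` from the tail. Outside the exceptional vectors
the tail has an entry `≥ 3` or two entries `≥ 2`, which makes `a_{r-1}` of the tail at least `2r`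
once `r ≥ 3`. For `r = 2` the estimate is a direct computation.
-/

open Filter Topology
open scoped BigOperators

lemma add_div_card_le_expect {ι : Type*} {s : Finset ι} {x : ι → ℝ} {a : ℝ} {i : ι}
    (hi : i ∈ s) (ha : ∀ j ∈ s, a ≤ x j) : a + (x i - a) / #s ≤ 𝔼 j ∈ s, x j := by
  have hs : (0 : ℝ) < #s := by exact_mod_cast card_pos.2 ⟨i, hi⟩
  have hsum : x i - a ≤ ∑ j ∈ s, (x j - a) :=
    single_le_sum (f := fun j => x j - a) (fun j hj => sub_nonneg.2 (ha j hj)) hi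
  rw [sum_sub_distrib, sum_const, nsmul_eq_mul] at hsum
  rw [expect_eq_sum_div_card, ← sub_nonneg]
  have hdiff : (∑ j ∈ s, x j) / #s - (a + (x i - a) / #s)
      = (∑ j ∈ s, x j - #s * a - (x i - a)) / #s := by
    field_simp
    ring
  rw [hdiff]
  exact div_nonneg (sub_nonneg.2 hsum) hs.le

lemma prod_add_div_le_prod_expect_Iic {n : ℕ} {x : Fin (n + 1) → ℝ} {a : ℝ} (ha₀ : 0 ≤ a)
    (ha : ∀ i, a ≤ x i) :
    ∏ d ∈ range (n + 1), (a + (x 0 - a) / (d + 1)) ≤ ∏ t, 𝔼 i ∈ Iic t, x i := by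
  rw [prod_range]
  refine prod_le_prod (fun t _ => ?_) fun t _ => ?_
  · have := sub_nonneg.2 (ha 0)
    positivity
  · simpa using add_div_card_le_expect (mem_Iic.2 (Fin.zero_le t)) fun j _ => ha j

lemma pow_div_factorial_le_prod_expect_Iic {n : ℕ} {x : Fin (n + 1) → ℝ} (hx : ∀ i, 0 ≤ x i) :
    x 0 ^ (n + 1) / (n + 1).factorial ≤ ∏ t, 𝔼 i ∈ Iic t, x i := by
  refine le_of_eq_of_le ?_ (prod_add_div_le_prod_expect_Iic le_rfl hx)
  simp [prod_div_distrib, ← prod_range_add_one_eq_factorial]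

lemma one_le_expect_Iic {n : ℕ} {x : Fin n → ℝ} (hx : ∀ i, 1 ≤ x i) (t : Fin n) :
    1 ≤ 𝔼 i ∈ Iic t, x i :=
  le_expect nonempty_Iic fun i _ => hx i

lemma one_le_prod_expect_Iic {n : ℕ} {x : Fin n → ℝ} (hx : ∀ i, 1 ≤ x i) :
    1 ≤ ∏ t, 𝔼 i ∈ Iic t, x i :=
  one_le_prod fun t _ => one_le_expect_Iic hx t

lemma hpoly_succ (n : ℕ) (x : Fin (n + 1) → ℝ) :
    hpoly (n + 1) x = (∏ t, ∑ i ∈ Iic t, x i) * hpoly n fun i => x i.succ := by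
  simp only [hpoly, prod_filter, Fintype.prod_prod_type]
  rw [Fin.prod_univ_succ]
  refine congrArg₂ (· * ·) (prod_congr rfl fun t _ => if_pos (Fin.zero_le t)) ?_
  refine prod_congr rfl fun l _ => ?_
  rw [Fin.prod_univ_succ, if_neg (Fin.succ_pos l).not_ge, one_mul]
  refine prod_congr rfl fun j _ => ?_
  rw [← Fin.map_succEmb_Icc, sum_map]
  simp only [Fin.succ_le_succ_iff, Fin.coe_succEmb]

lemma apoly_succ (n : ℕ) (x : Fin (n + 1) → ℝ) :
    apoly (n + 1) x = (∏ t, 𝔼 i ∈ Iic t, x i) * apoly n fun i => x i.succ := by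
  have hcard : ∏ t : Fin (n + 1), (#(Iic t) : ℝ) = (n + 1).factorial := by
    simp [← prod_range_add_one_eq_factorial, prod_range]
  have hconst : (crconst (n + 1) : ℝ) = (n + 1).factorial * crconst n := by
    rw [crconst, prod_range_succ, mul_comm]
    push_cast [crconst]
    rfl
  simp only [apoly, hpoly_succ, expect_eq_sum_div_card, prod_div_distrib, hcard, hconst]
  exact mul_div_mul_comm _ _ _ _

lemma hpoly_comp_rev (n : ℕ) (x : Fin n → ℝ) : hpoly n (fun i => x i.rev) = hpoly n x := by
  refine prod_bij' (fun p _ => (p.2.rev, p.1.rev)) (fun p _ => (p.2.rev, p.1.rev))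
    (by simp) (by simp) (by simp) (by simp) fun p _ => ?_
  rw [← Fin.map_revPerm_Icc, sum_map]
  simp

lemma apoly_comp_rev (n : ℕ) (x : Fin n → ℝ) : apoly n (fun i => x i.rev) = apoly n x := by
  rw [apoly, apoly, hpoly_comp_rev]

lemma one_le_apoly {n : ℕ} {x : Fin n → ℝ} (hx : ∀ i, 1 ≤ x i) : 1 ≤ apoly n x := by
  induction n with
  | zero => simp [apoly, hpoly, crconst]
  | succ n ih =>
    rw [apoly_succ]
    exact one_le_mul_of_one_le_of_one_le (one_le_prod_expect_Iic hx) (ih fun i => hx i.succ)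

lemma prod_expect_Iic_le_apoly {n : ℕ} {x : Fin (n + 1) → ℝ} (hx : ∀ i, 1 ≤ x i) :
    ∏ t, 𝔼 i ∈ Iic t, x i ≤ apoly (n + 1) x := by
  rw [apoly_succ]
  exact le_mul_of_one_le_right (zero_le_one.trans (one_le_prod_expect_Iic hx))
    (one_le_apoly fun i => hx i.succ)

lemma one_add_div_mul_apoly_tail_le_apoly {n : ℕ} {x : Fin (n + 1) → ℝ} (hx : ∀ i, 1 ≤ x i)
    (i : Fin (n + 1)) :
    (1 + (x i - 1) / (n + 1)) * apoly n (fun k => x k.succ) ≤ apoly (n + 1) x := by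
  rw [apoly_succ]
  refine mul_le_mul_of_nonneg_right ?_ (zero_le_one.trans (one_le_apoly fun k => hx k.succ))
  calc 1 + (x i - 1) / (n + 1) ≤ 𝔼 k, x k := by
        simpa using add_div_card_le_expect (mem_univ i) fun k _ => hx k
    _ = ∏ t ∈ {Fin.last n}, 𝔼 k ∈ Iic t, x k := by
        rw [prod_singleton, ← Fin.top_eq_last, Iic_top]
    _ ≤ ∏ t, 𝔼 k ∈ Iic t, x k :=
        prod_le_prod_of_subset_of_one_le (subset_univ _)
          (fun t _ => zero_le_one.trans (one_le_expect_Iic hx t))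
          fun t _ _ => one_le_expect_Iic hx t

lemma pow_div_factorial_mul_apoly_tail_le_apoly {n : ℕ} {x : Fin (n + 1) → ℝ}
    (hx : ∀ i, 1 ≤ x i) :
    x 0 ^ (n + 1) / (n + 1).factorial * apoly n (fun i => x i.succ) ≤ apoly (n + 1) x := by
  rw [apoly_succ]
  exact mul_le_mul_of_nonneg_right
    (pow_div_factorial_le_prod_expect_Iic fun i => zero_le_one.trans (hx i))
    (zero_le_one.trans (one_le_apoly fun i => hx i.succ))

-- Grow an interval one index at a time from `{i}` to everything: the interval of length `d + 1`
-- contributes a mean of at least `1 + (x i - 1) / (d + 1)`.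
lemma prod_one_add_div_le_apoly {n : ℕ} {x : Fin n → ℝ} (hx : ∀ i, 1 ≤ x i) (i : Fin n) :
    ∏ d ∈ range n, (1 + (x i - 1) / (d + 1)) ≤ apoly n x := by
  induction n with
  | zero => exact i.elim0
  | succ n ih =>
    induction i using Fin.cases with
    | zero =>
      exact (prod_add_div_le_prod_expect_Iic zero_le_one hx).trans (prod_expect_Iic_le_apoly hx)
    | succ i =>
      have hxi := sub_nonneg.2 (hx i.succ)
      calc ∏ d ∈ range (n + 1), (1 + (x i.succ - 1) / (d + 1))
          = (1 + (x i.succ - 1) / (n + 1)) * ∏ d ∈ range n, (1 + (x i.succ - 1) / (d + 1)) := by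
            rw [prod_range_succ, mul_comm]
        _ ≤ (1 + (x i.succ - 1) / (n + 1)) * apoly n fun k => x k.succ := by
            gcongr
            exact ih (fun k => hx k.succ) i
        _ ≤ apoly (n + 1) x := one_add_div_mul_apoly_tail_le_apoly hx i.succ

lemma le_apoly {n : ℕ} {x : Fin n → ℝ} (hx : ∀ i, 1 ≤ x i) (i : Fin n) : x i ≤ apoly n x := by
  have hxi := sub_nonneg.2 (hx i)
  have hsingle : ∏ d ∈ {0}, (1 + (x i - 1) / ((d : ℕ) + 1)) ≤
      ∏ d ∈ range n, (1 + (x i - 1) / (d + 1)) := by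
    refine prod_le_prod_of_subset_of_one_le (singleton_subset_iff.2 (mem_range.2 i.pos))
      (fun d _ => by positivity) fun d _ _ => le_add_of_nonneg_right (by positivity)
  simpa using hsingle.trans (prod_one_add_div_le_apoly hx i)

lemma div_pow_le_apoly {n : ℕ} {x : Fin n → ℝ} (hx : ∀ i, 1 ≤ x i) (i : Fin n) :
    (x i / n) ^ n ≤ apoly n x := by
  have hxi := hx i
  calc (x i / n) ^ n = ∏ _d ∈ range n, x i / n := by rw [prod_const, card_range]
    _ ≤ ∏ d ∈ range n, (1 + (x i - 1) / (d + 1)) := by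
      refine prod_le_prod (fun d _ => by positivity) fun d hd => ?_
      have hdn : (d : ℝ) + 1 ≤ n := by exact_mod_cast mem_range.1 hd
      calc x i / n ≤ x i / (d + 1) := by gcongr
        _ ≤ (d + x i) / (d + 1) := by gcongr; linarith [(d.cast_nonneg : (0 : ℝ) ≤ d)]
        _ = 1 + (x i - 1) / (d + 1) := by field_simp; ring
    _ ≤ apoly n x := prod_one_add_div_le_apoly hx i

lemma prod_range_one_add_div_eq_choose (n c : ℕ) :
    ∏ d ∈ range n, (1 + c / (d + 1) : ℝ) = (n + c).choose c := by
  induction n with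
  | zero => simp
  | succ n ih =>
    have hstep : ((n + 1 + c).choose c * (n + 1) : ℝ) = (n + 1 + c) * (n + c).choose c := by
      have := Nat.choose_mul_succ_eq (n + c) c
      rw [show n + c + 1 - c = n + 1 by omega, show n + c + 1 = n + 1 + c by omega] at this
      exact_mod_cast (this.symm.trans (mul_comm _ _))
    rw [prod_range_succ, ih]
    field_simp
    linarith

lemma choose_le_prod_range_one_add_div {n c : ℕ} {a : ℝ} (ha : c ≤ a) :
    ((n + c).choose c : ℝ) ≤ ∏ d ∈ range n, (1 + a / (d + 1)) := by
  rw [← prod_range_one_add_div_eq_choose]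
  exact prod_le_prod (fun d _ => by positivity) fun d _ => by gcongr

lemma two_mul_succ_le_apoly_of_three_le {n : ℕ} (hn : 2 ≤ n) {x : Fin n → ℝ}
    (hx : ∀ i, 1 ≤ x i) {i : Fin n} (hi : 3 ≤ x i) : 2 * (n + 1 : ℝ) ≤ apoly n x := by
  have hchoose : ((n + 2).choose 2 : ℝ) ≤ apoly n x :=
    (choose_le_prod_range_one_add_div (by norm_num; linarith)).trans
      (prod_one_add_div_le_apoly hx i)
  rw [Nat.cast_choose_two] at hchoose
  push_cast at hchoose
  have hn' : (2 : ℝ) ≤ n := by exact_mod_cast hn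
  nlinarith

-- The singleton interval `{j}` supplies a factor of 2 on top of the intervals growing from `{i}`.
lemma two_mul_succ_le_apoly_of_two_le_of_lt {n : ℕ} {x : Fin n → ℝ} (hx : ∀ i, 1 ≤ x i)
    {i j : Fin n} (hij : i < j) (hi : 2 ≤ x i) (hj : 2 ≤ x j) :
    2 * (n + 1 : ℝ) ≤ apoly n x := by
  induction n with
  | zero => exact i.elim0
  | succ n ih =>
    obtain ⟨j, rfl⟩ := Fin.exists_succ_eq.2 (Fin.ne_zero_of_lt hij)
    induction i using Fin.cases with
    | zero =>
      have hrow : ((n + 1 + 1).choose 1 : ℝ) ≤ ∏ t, 𝔼 k ∈ Iic t, x k :=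
        (choose_le_prod_range_one_add_div (by push_cast; linarith)).trans
          (prod_add_div_le_prod_expect_Iic zero_le_one hx)
      have htail : 2 ≤ apoly n fun k => x k.succ := hj.trans (le_apoly (fun k => hx k.succ) j)
      rw [Nat.choose_one_right] at hrow
      rw [apoly_succ, mul_comm 2]
      push_cast at hrow ⊢
      exact mul_le_mul hrow htail zero_le_two (le_trans (by positivity) hrow)
    | succ i =>
      have htail := ih (fun k => hx k.succ) (Fin.succ_lt_succ_iff.1 hij) hi hj
      calc 2 * ((n + 1 : ℕ) + 1 : ℝ) = (1 + 1 / (n + 1 : ℝ)) * (2 * (n + 1)) := by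
            push_cast
            field_simp
        _ ≤ (1 + (x i.succ - 1) / (n + 1)) * apoly n fun k => x k.succ := by
            have hxi := sub_nonneg.2 (hx i.succ)
            gcongr
            linarith
        _ ≤ apoly (n + 1) x := one_add_div_mul_apoly_tail_le_apoly hx i.succ

lemma two_mul_succ_le_apoly_of_two_le {n : ℕ} {x : Fin n → ℝ} (hx : ∀ i, 1 ≤ x i)
    {i j : Fin n} (hij : i ≠ j) (hi : 2 ≤ x i) (hj : 2 ≤ x j) : 2 * (n + 1 : ℝ) ≤ apoly n x := by
  rcases hij.lt_or_gt with h | h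
  · exact two_mul_succ_le_apoly_of_two_le_of_lt hx h hi hj
  · exact two_mul_succ_le_apoly_of_two_le_of_lt hx h hj hi

-- An interior index lies in at least `r + 1` intervals: the `r - 1` growing from it inside the
-- tail, and the two initial intervals ending at the last two indices.
lemma div_pow_succ_le_apoly {n : ℕ} {x : Fin (n + 2) → ℝ} (hx : ∀ i, 1 ≤ x i)
    {i : Fin (n + 2)} (hi₀ : i ≠ 0) (hi : i ≠ Fin.last (n + 1)) :
    (x i / (n + 2)) ^ (n + 3) ≤ apoly (n + 2) x := by
  have hxi := hx i
  have hmean : ∀ t, i ≤ t → x i / (n + 2) ≤ 𝔼 k ∈ Iic t, x k := fun t ht => by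
    have hcard : ((t : ℕ) + 1 : ℝ) ≤ n + 2 := by exact_mod_cast t.2
    calc x i / (n + 2) ≤ x i / (t + 1) := by gcongr
      _ ≤ 𝔼 k ∈ Iic t, x k := by
        simpa using add_div_card_le_expect (mem_Iic.2 ht) fun k _ => zero_le_one.trans (hx k)
  have hrow : (x i / (n + 2)) ^ 2 ≤ ∏ t, 𝔼 k ∈ Iic t, x k := by
    rw [Fin.prod_univ_castSucc, Fin.prod_univ_castSucc, sq]
    refine mul_le_mul ?_ (hmean _ (Fin.le_last i)) (by positivity)
      (mul_nonneg (prod_nonneg fun t _ => zero_le_one.trans (one_le_expect_Iic hx _))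
        (zero_le_one.trans (one_le_expect_Iic hx _)))
    refine (hmean _ ?_).trans (le_mul_of_one_le_left (zero_le_one.trans (one_le_expect_Iic hx _))
      (one_le_prod fun t _ => one_le_expect_Iic hx _))
    exact Fin.le_castSucc_iff.2 (Fin.lt_last_iff_ne_last.2 hi)
  have htail : (x i / (n + 2)) ^ (n + 1) ≤ apoly (n + 1) fun k => x k.succ := by
    obtain ⟨j, rfl⟩ := Fin.exists_succ_eq.2 hi₀
    refine le_trans ?_ (div_pow_le_apoly (fun k => hx k.succ) j)
    gcongr
    push_cast
    linarith
  rw [apoly_succ, show n + 3 = 2 + (n + 1) by ring, pow_add]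
  exact mul_le_mul hrow htail (by positivity) (le_trans (by positivity) hrow)

/-- The normalized height `(2/r) L(x - 𝟙)`; the factor `2/r` gives the first and the last entry
weight `1`. -/
noncomputable def normalizedHeight {r : ℕ} (x : Fin r → ℝ) : ℝ :=
  2 / r * Lfun r fun i => x i - 1

lemma normalizedHeight_eq_sum {r : ℕ} (x : Fin r → ℝ) :
    normalizedHeight x = ∑ j : Fin r, (j + 1 : ℝ) * (r - j) / r * (x j - 1) := by
  rw [normalizedHeight, Lfun, ← mul_assoc, mul_sum]
  exact sum_congr rfl fun j _ => by ring

lemma normalizedHeight_comp_rev {r : ℕ} (x : Fin r → ℝ) :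
    normalizedHeight (fun i => x i.rev) = normalizedHeight x := by
  rw [normalizedHeight_eq_sum, normalizedHeight_eq_sum]
  refine Fintype.sum_equiv Fin.revPerm _ _ fun i => ?_
  rw [Fin.revPerm_apply, Fin.val_rev, Nat.cast_sub i.2]
  push_cast
  ring

lemma normalizedHeight_nonneg {r : ℕ} {x : Fin r → ℝ} (hx : ∀ i, 1 ≤ x i) :
    0 ≤ normalizedHeight x := by
  rw [normalizedHeight_eq_sum]
  refine sum_nonneg fun j _ => mul_nonneg (div_nonneg (mul_nonneg (by positivity) ?_)
    (by positivity)) (sub_nonneg.2 (hx j))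
  exact sub_nonneg.2 (by exact_mod_cast j.2.le)

lemma normalizedHeight_le_add {n : ℕ} {x : Fin (n + 1) → ℝ} {B : ℝ} (hB₀ : 0 ≤ B)
    (hB : ∀ i : Fin n, x i.succ ≤ B) : normalizedHeight x ≤ x 0 + n * (n + 1) * B := by
  have htail : ∀ j : Fin n, ((j.succ : ℕ) + 1 : ℝ) * ((n + 1 : ℕ) - (j.succ : ℕ)) / (n + 1 : ℕ) *
      (x j.succ - 1) ≤ (n + 1) * B := fun j => by
    have hj : (j : ℝ) + 1 ≤ n := by exact_mod_cast j.2
    have hw : ((j.succ : ℕ) + 1 : ℝ) * ((n + 1 : ℕ) - (j.succ : ℕ)) / (n + 1 : ℕ) ≤ n + 1 := by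
      push_cast [Fin.val_succ]
      rw [div_le_iff₀ (by positivity)]
      exact mul_le_mul (by linarith) (by linarith) (by linarith) (by positivity)
    have hw₀ : 0 ≤ ((j.succ : ℕ) + 1 : ℝ) * ((n + 1 : ℕ) - (j.succ : ℕ)) / (n + 1 : ℕ) := by
      push_cast [Fin.val_succ]
      exact div_nonneg (mul_nonneg (by positivity) (by linarith)) (by positivity)
    exact (mul_le_mul_of_nonneg_left (by linarith [hB j]) hw₀).trans
      (mul_le_mul_of_nonneg_right hw hB₀)
  rw [normalizedHeight_eq_sum, Fin.sum_univ_succ]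
  have hsum := sum_le_card_nsmul univ _ _ fun j _ => htail j
  rw [card_univ, Fintype.card_fin, nsmul_eq_mul, ← mul_assoc] at hsum
  refine add_le_add ?_ hsum
  have hn : ((n : ℝ) + 1) ≠ 0 := by positivity
  simp [hn]

lemma normalizedHeight_le_mul {n : ℕ} {x : Fin (n + 1) → ℝ} {B : ℝ} (hB₀ : 0 ≤ B)
    (hB : ∀ i, x i ≤ B) : normalizedHeight x ≤ (n + 1) ^ 2 * B := by
  have := normalizedHeight_le_add hB₀ fun i => hB i.succ
  nlinarith [hB 0, mul_nonneg (n.cast_nonneg : (0 : ℝ) ≤ n) hB₀]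

lemma eventually_add_pow_le_mul_pow (r : ℕ) (C : ℝ) {c : ℝ} (hc : 1 < c) :
    ∀ᶠ y : ℝ in atTop, (y + C) ^ r ≤ c * y ^ r := by
  have hlim : Tendsto (fun y : ℝ => (1 + C / y) ^ r) atTop (𝓝 1) := by
    simpa using ((tendsto_const_nhds (x := C)).div_atTop tendsto_id).const_add 1 |>.pow r
  filter_upwards [hlim.eventually_lt_const hc, eventually_gt_atTop 0] with y hy hy₀
  calc (y + C) ^ r = (1 + C / y) ^ r * y ^ r := by rw [← mul_pow]; field_simp
    _ ≤ c * y ^ r := by gcongr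

lemma three_halves_mul_pow_le_apoly_of_le_mul {n : ℕ} {x : Fin (n + 1) → ℝ} (hx : ∀ i, 1 ≤ x i)
    (h : 3 / 2 * (n + 1) * normalizedHeight x ^ (n + 1) ≤
      x 0 ^ (n + 1) * apoly n fun i => x i.succ) :
    3 / 2 * (1 / n.factorial) * normalizedHeight x ^ (n + 1) ≤ apoly (n + 1) x := by
  calc 3 / 2 * (1 / n.factorial) * normalizedHeight x ^ (n + 1)
      = 3 / 2 * (n + 1) * normalizedHeight x ^ (n + 1) / (n + 1).factorial := by
        rw [Nat.factorial_succ]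
        push_cast
        field_simp
    _ ≤ x 0 ^ (n + 1) * apoly n (fun i => x i.succ) / (n + 1).factorial := by gcongr
    _ = x 0 ^ (n + 1) / (n + 1).factorial * apoly n fun i => x i.succ := by ring
    _ ≤ apoly (n + 1) x := pow_div_factorial_mul_apoly_tail_le_apoly hx

-- Either some tail entry is so large that `apoly n` of the tail beats every constant, or the tail
-- is bounded, so that the normalized height is `x 0 + O(1)`.
lemma eventually_three_halves_mul_pow_le_apoly_of_first_max (n : ℕ) :
    ∀ᶠ N in atTop, ∀ x : Fin (n + 1) → ℝ, (∀ i, 1 ≤ x i) → (∀ i, x i ≤ x 0) → N = x 0 →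
      2 * (n + 1 : ℝ) ≤ apoly n (fun i => x i.succ) →
      3 / 2 * (1 / n.factorial) * normalizedHeight x ^ (n + 1) ≤ apoly (n + 1) x := by
  set B : ℝ := 3 / 2 * (n + 1) * ((n + 1) ^ 2) ^ (n + 1) with hB
  have hB₀ : 0 ≤ B := by positivity
  filter_upwards [eventually_add_pow_le_mul_pow (n + 1) (n * (n + 1) * B)
    (show (1 : ℝ) < 4 / 3 by norm_num)] with N hN x hx hmax hNx htail
  subst hNx
  have hx₀ := hx 0
  have hH := normalizedHeight_nonneg hx
  refine three_halves_mul_pow_le_apoly_of_le_mul hx ?_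
  by_cases hlarge : ∃ j : Fin n, B ≤ x j.succ
  · obtain ⟨j, hj⟩ := hlarge
    calc 3 / 2 * (n + 1) * normalizedHeight x ^ (n + 1)
        ≤ 3 / 2 * (n + 1) * ((n + 1) ^ 2 * x 0) ^ (n + 1) := by
          gcongr
          exact normalizedHeight_le_mul (zero_le_one.trans hx₀) hmax
      _ = x 0 ^ (n + 1) * B := by rw [hB, mul_pow]; ring
      _ ≤ x 0 ^ (n + 1) * apoly n fun i => x i.succ := by
          gcongr
          exact hj.trans (le_apoly (fun i => hx i.succ) j)
  · push Not at hlarge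
    calc 3 / 2 * (n + 1) * normalizedHeight x ^ (n + 1)
        ≤ 3 / 2 * (n + 1) * (x 0 + n * (n + 1) * B) ^ (n + 1) := by
          gcongr
          exact normalizedHeight_le_add hB₀ fun i => (hlarge i).le
      _ ≤ 3 / 2 * (n + 1) * (4 / 3 * x 0 ^ (n + 1)) := by gcongr
      _ = x 0 ^ (n + 1) * (2 * (n + 1)) := by ring
      _ ≤ x 0 ^ (n + 1) * apoly n fun i => x i.succ := by gcongr

lemma eventually_three_halves_mul_pow_le_apoly_of_interior_max (n : ℕ) :
    ∀ᶠ N in atTop, ∀ x : Fin (n + 2) → ℝ, (∀ i, 1 ≤ x i) →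
      ∀ i, i ≠ 0 → i ≠ Fin.last (n + 1) → (∀ j, x j ≤ x i) → N = x i →
      3 / 2 * (1 / (n + 1).factorial) * normalizedHeight x ^ (n + 2) ≤ apoly (n + 2) x := by
  filter_upwards [eventually_ge_atTop
    (3 / 2 * ((n + 2) ^ 2 : ℝ) ^ (n + 2) * (n + 2) ^ (n + 3))] with N hN x hx i hi₀ hi hmax hNx
  subst hNx
  have hxi := hx i
  have hH := normalizedHeight_nonneg hx
  have hle : normalizedHeight x ≤ (n + 2) ^ 2 * x i := by
    refine (normalizedHeight_le_mul (zero_le_one.trans hxi) hmax).trans_eq ?_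
    push_cast
    ring
  have hfact : 1 / ((n + 1).factorial : ℝ) ≤ 1 :=
    div_le_one_of_le₀ (by exact_mod_cast (n + 1).factorial_pos) (by positivity)
  calc 3 / 2 * (1 / (n + 1).factorial) * normalizedHeight x ^ (n + 2)
      ≤ 3 / 2 * 1 * ((n + 2) ^ 2 * x i) ^ (n + 2) := by gcongr
    _ = 3 / 2 * ((n + 2) ^ 2) ^ (n + 2) * (n + 2) ^ (n + 3) * x i ^ (n + 2) /
          (n + 2) ^ (n + 3) := by
        rw [mul_pow]
        field_simp
    _ ≤ x i * x i ^ (n + 2) / (n + 2) ^ (n + 3) := by gcongr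
    _ = (x i / (n + 2)) ^ (n + 3) := by rw [div_pow, ← pow_succ']
    _ ≤ apoly (n + 2) x := div_pow_succ_le_apoly hx hi₀ hi

lemma apoly_two (x : Fin 2 → ℝ) : apoly 2 x = x 0 * x 1 * (x 0 + x 1) / 2 := by
  have hpairs : (univ.filter fun p : Fin 2 × Fin 2 => p.1 ≤ p.2) = {(0, 0), (1, 1), (0, 1)} := by
    decide
  have hIcc : Icc (0 : Fin 2) 1 = {0, 1} := by decide
  have hconst : crconst 2 = 2 := by decide
  simp [apoly, hpoly, hpairs, hIcc, hconst, mul_assoc]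

lemma three_halves_mul_sq_le_apoly_two {x : Fin 2 → ℝ} (hx : ∀ i, 3 ≤ x i) :
    3 / 2 * normalizedHeight x ^ 2 ≤ apoly 2 x := by
  have hH : normalizedHeight x = x 0 + x 1 - 2 := by
    rw [normalizedHeight_eq_sum, Fin.sum_univ_two]
    norm_num
    ring
  rw [hH, apoly_two]
  have h₀ := sub_nonneg.2 (hx 0)
  have h₁ := sub_nonneg.2 (hx 1)
  nlinarith [mul_nonneg (mul_nonneg h₀ h₁) (by linarith : 0 ≤ x 0 + x 1)]

/-- The vectors `(a, 1, …, 1)`, and `(a, 1, …, 1, 2, 1, …, 1)` with `a ≥ 2`: those excluded from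
the estimate when their first entry is the large one. Their reverses are excluded as well. -/
def IsExceptional {n : ℕ} (v : Fin (n + 1) → ℕ) : Prop :=
  (∀ i, i ≠ 0 → v i = 1) ∨ (2 ≤ v 0 ∧ ∃ k, k ≠ 0 ∧ v k = 2 ∧ ∀ i, i ≠ 0 → i ≠ k → v i = 1)

lemma isExceptional_comp_rev {n : ℕ} {v : Fin (n + 1) → ℕ} :
    IsExceptional (fun i => v i.rev) ↔ (∀ i, i ≠ Fin.last n → v i = 1) ∨
      (2 ≤ v (Fin.last n) ∧ ∃ k, k ≠ Fin.last n ∧ v k = 2 ∧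
        ∀ i, i ≠ Fin.last n → i ≠ k → v i = 1) := by
  have hrev : ∀ i : Fin (n + 1), i.rev ≠ 0 ↔ i ≠ Fin.last n := fun i => by
    rw [← Fin.rev_last, Fin.rev_inj.ne]
  simp only [IsExceptional, ← Fin.revPerm.forall_congr_right (q := fun i => i ≠ 0 → _),
    ← Fin.revPerm.exists_congr_right (q := fun i => i ≠ 0 ∧ _), Fin.revPerm_apply, Fin.rev_rev,
    Fin.rev_zero, hrev, Fin.rev_inj.ne]

lemma isExceptional_or_comp_rev_iff {n : ℕ} {v : Fin (n + 1) → ℕ} :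
    IsExceptional v ∨ IsExceptional (fun i => v i.rev) ↔
      (∀ i, i ≠ 0 → v i = 1) ∨ (∀ i, i ≠ Fin.last n → v i = 1) ∨
      (2 ≤ v 0 ∧ ∃ k, k ≠ 0 ∧ v k = 2 ∧ ∀ i, i ≠ 0 → i ≠ k → v i = 1) ∨
      (2 ≤ v (Fin.last n) ∧ ∃ k, k ≠ Fin.last n ∧ v k = 2 ∧
        ∀ i, i ≠ Fin.last n → i ≠ k → v i = 1) := by
  rw [isExceptional_comp_rev, IsExceptional, or_or_or_comm, or_assoc]

lemma two_mul_succ_le_apoly_tail {n : ℕ} (hn : 2 ≤ n) {v : Fin (n + 1) → ℕ} (hv : ∀ i, 1 ≤ v i)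
    (hv₀ : 2 ≤ v 0) (hexc : ¬ IsExceptional v) :
    2 * (n + 1 : ℝ) ≤ apoly n fun i => (v i.succ : ℝ) := by
  have hx : ∀ i : Fin n, (1 : ℝ) ≤ v i.succ := fun i => by exact_mod_cast hv i.succ
  have htwo : ∀ {i}, v i ≠ 1 → 2 ≤ v i := fun {i} hi => by have := hv i; omega
  obtain ⟨hones, htwos⟩ := not_or.1 hexc
  push Not at hones htwos
  obtain ⟨i, hi₀, hi⟩ := hones
  obtain ⟨i, rfl⟩ := Fin.exists_succ_eq.2 hi₀
  rcases (htwo hi).eq_or_lt' with hi2 | hi3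
  · obtain ⟨j, hj₀, hji, hj⟩ := htwos hv₀ i.succ hi₀ hi2
    obtain ⟨j, rfl⟩ := Fin.exists_succ_eq.2 hj₀
    exact two_mul_succ_le_apoly_of_two_le hx (fun h => hji (congrArg Fin.succ h))
      (by exact_mod_cast htwo hj) (by exact_mod_cast hi2.ge)
  · exact two_mul_succ_le_apoly_of_three_le hn hx (i := i) (by exact_mod_cast hi3)

lemma three_le_of_not_isExceptional {v : Fin 2 → ℕ} (hv : ∀ i, 1 ≤ v i)
    (hexc : ¬ IsExceptional v) (hexc_rev : ¬ IsExceptional fun i => v i.rev) : ∀ i, 3 ≤ v i := by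
  have hfirst : v 1 ≠ 1 ∧ (2 ≤ v 0 → v 1 ≠ 2) := by
    simpa [IsExceptional, Fin.forall_fin_two, Fin.exists_fin_two] using hexc
  have hlast : v 0 ≠ 1 ∧ (2 ≤ v 1 → v 0 ≠ 2) := by
    simpa [IsExceptional, Fin.forall_fin_two, Fin.exists_fin_two] using hexc_rev
  have h₀ := hv 0
  have h₁ := hv 1
  exact Fin.forall_fin_two.2 ⟨by omega, by omega⟩

lemma lt_of_mul_lt_Lfun {n : ℕ} {x : Fin (n + 1) → ℝ} {N B : ℝ} (hB₀ : 0 ≤ B)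
    (hB : ∀ i, x i ≤ B) (hN : (n + 1) ^ 3 * N < Lfun (n + 1) fun i => x i - 1) : N < B := by
  have hH := normalizedHeight_le_mul hB₀ hB
  rw [normalizedHeight, div_mul_eq_mul_div, div_le_iff₀ (by positivity)] at hH
  push_cast at hH
  have hpow : (n + 1 : ℝ) ^ 3 * N < (n + 1) ^ 3 * B := by
    have : 0 ≤ (n + 1 : ℝ) ^ 3 * B := by positivity
    linarith
  exact lt_of_mul_lt_mul_left hpow (by positivity)

lemma eventually_three_halves_mul_pow_le_apoly_of_max {n : ℕ} (hn : 1 ≤ n) :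
    ∀ᶠ N : ℝ in atTop, ∀ v : Fin (n + 2) → ℕ, (∀ i, 1 ≤ v i) → ¬ IsExceptional v →
      ¬ IsExceptional (fun i => v i.rev) → ∀ i, (∀ j, v j ≤ v i) → N = v i →
      3 / 2 * (1 / (n + 1).factorial) * normalizedHeight (fun i => (v i : ℝ)) ^ (n + 2) ≤
        apoly (n + 2) fun i => v i := by
  filter_upwards [eventually_three_halves_mul_pow_le_apoly_of_first_max (n + 1),
    eventually_three_halves_mul_pow_le_apoly_of_interior_max n, eventually_ge_atTop 2]
    with N hfirst hinterior hN2 v hv hexc hexc_rev i hmax hNi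
  have hfirst_nat : ∀ w : Fin (n + 2) → ℕ, (∀ i, 1 ≤ w i) → ¬ IsExceptional w →
      (∀ j, w j ≤ w 0) → N = w 0 →
      3 / 2 * (1 / (n + 1).factorial) * normalizedHeight (fun i => (w i : ℝ)) ^ (n + 2) ≤
        apoly (n + 2) fun i => w i := fun w hw hexc hmax hNw =>
    hfirst _ (by exact_mod_cast hw) (by exact_mod_cast hmax) hNw
      (two_mul_succ_le_apoly_tail (by omega) hw (by exact_mod_cast hNw ▸ hN2) hexc)
  by_cases hi₀ : i = 0
  · subst hi₀
    exact hfirst_nat v hv hexc hmax hNi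
  by_cases hi : i = Fin.last (n + 1)
  · subst hi
    have hrev := hfirst_nat (fun i => v i.rev) (fun i => hv _) hexc_rev
      (by simpa using fun j => hmax (Fin.rev j)) (by simpa using hNi)
    rwa [normalizedHeight_comp_rev fun i => (v i : ℝ),
      apoly_comp_rev _ fun i => (v i : ℝ)] at hrev
  · exact hinterior _ (by exact_mod_cast hv) i hi₀ hi (by exact_mod_cast hmax) hNi

/-- Lemma 5.2: with `r = m+2`, there is `N_r` such that every `v ∈ ℕ^r` not in
`Λ₁ ∪ Λ₂` (i.e. not of the form `(a,1,…,1)`, `(1,…,1,a)`, `(a,1,…,1,2,1,…,1)` with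
`a ≥ 2`, or its reverse) with `L(v-𝟙) > N_r` satisfies
`a_r(v) ≥ (3/2)(1/(r-1)!)((2/r)L(v-𝟙))^r`. -/
theorem stmt16 (m : ℕ) :
    ∃ Nr : ℕ, ∀ v : Fin (m + 2) → ℕ, (∀ i, 1 ≤ v i) →
      ¬ ((∀ i, i ≠ 0 → v i = 1) ∨
         (∀ i, i ≠ Fin.last (m + 1) → v i = 1) ∨
         (2 ≤ v 0 ∧ ∃ n : Fin (m + 2), n ≠ 0 ∧ v n = 2 ∧
            ∀ i, i ≠ 0 → i ≠ n → v i = 1) ∨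
         (2 ≤ v (Fin.last (m + 1)) ∧ ∃ n : Fin (m + 2), n ≠ Fin.last (m + 1) ∧ v n = 2 ∧
            ∀ i, i ≠ Fin.last (m + 1) → i ≠ n → v i = 1)) →
      (Nr : ℝ) < Lfun (m + 2) (fun i => (v i : ℝ) - 1) →
      3 / 2 * (1 / (Nat.factorial (m + 1)))
          * (2 / ((m : ℝ) + 2) * Lfun (m + 2) (fun i => (v i : ℝ) - 1)) ^ (m + 2)
        ≤ apoly (m + 2) (fun i => (v i : ℝ)) := by
  rcases m.eq_zero_or_pos with rfl | hm
  · refine ⟨0, fun v hv hexc _ => ?_⟩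
    rw [← isExceptional_or_comp_rev_iff, not_or] at hexc
    simpa [normalizedHeight] using three_halves_mul_sq_le_apoly_two (x := fun i => v i)
      (by exact_mod_cast three_le_of_not_isExceptional hv hexc.1 hexc.2)
  · obtain ⟨N, hN⟩ := (eventually_three_halves_mul_pow_le_apoly_of_max hm).exists_forall_of_atTop
    refine ⟨⌈((m + 1 : ℕ) + 1 : ℝ) ^ 3 * N⌉₊, fun v hv hexc hL => ?_⟩
    rw [← isExceptional_or_comp_rev_iff, not_or] at hexc
    obtain ⟨i, hi⟩ := Finite.exists_max v
    have hNi : N < v i := lt_of_mul_lt_Lfun (by positivity) (by exact_mod_cast hi)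
      ((Nat.le_ceil _).trans_lt hL)
    simpa [normalizedHeight] using hN _ hNi.le v hv hexc.1 hexc.2 i hi rfl
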